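/- arXiv:2505.23609 — 4 statements merged into one kernel-verified Lean document; each statement's English description precedes it below -/
import Mathlib

section
/- Let n ≥ 1, d ≥ 1 and k ≥ 3. Let ρ : S_n → GL_m(ℂ) be a representation such that ρ(g) is unitary for every g. Let f₁, f₂ : S_n → ℂ^d satisfy f₁(σ) = f₂(σ̄σ) for a fixed σ̄ ∈ S_n and every σ ∈ S_n. Then the k-Spectra of f₁ and f₂ are identical: for every G_{k−2} ∈ (S_n)^{k−2} and every multi-index I_k = (i₁,…,i_k) ∈ {1,…,d}^k, one has r̂^(k)_{f₁,I_{k−1}}(G_{k−2}, ρ)† · f̂₁,_{i_k}(ρ) = r̂^(k)_{f₂,I_{k−1}}(G_{k−2}, ρ)† · f̂₂,_{i_k}(ρ). -/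
open scoped Matrix

/-- Fourier transform of `u : S_n → ℂ` at a matrix representation `ρ`:
`û(ρ) = (1/|S_n|) ∑_g u(g) ρ(g)`. -/
noncomputable def fourierPerm {n m : ℕ} (u : Equiv.Perm (Fin n) → ℂ)
    (ρ : Equiv.Perm (Fin n) → Matrix (Fin m) (Fin m) ℂ) : Matrix (Fin m) (Fin m) ℂ :=
  ((Nat.factorial n : ℂ))⁻¹ • ∑ g : Equiv.Perm (Fin n), u g • ρ g

/-- `r̂^(k)_{f,I_{k-1}}(G_{k-2}, ρ) = (1/|S_n|) ∑_{g̃} f_{i_{k-1}}(g̃) (∏_{l=1}^{k-2} f_{i_l}(g̃gₗ)) ρ(g̃)`,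
where the first `k-2` indices are given by `I : Fin p → Fin d` (with `p = k-2`) and the
`(k-1)`-st index is `i`. -/
noncomputable def rhatMulti {n d m p : ℕ} (f : Equiv.Perm (Fin n) → (Fin d → ℂ))
    (I : Fin p → Fin d) (i : Fin d) (G : Fin p → Equiv.Perm (Fin n))
    (ρ : Equiv.Perm (Fin n) → Matrix (Fin m) (Fin m) ℂ) : Matrix (Fin m) (Fin m) ℂ :=
  ((Nat.factorial n : ℂ))⁻¹ • ∑ g : Equiv.Perm (Fin n),
    (f g i * ∏ l : Fin p, f (g * G l) (I l)) • ρ g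

/-- Let `n ≥ 1`, `d ≥ 1`, `k ≥ 3`, and let `ρ : S_n → GL_m(ℂ)` be a unitary
representation. If `f₁(σ) = f₂(σ̄σ)` for a fixed `σ̄` and all `σ`, then for every
`G_{k-2} ∈ (S_n)^{k-2}` and every multi-index `I_k = (i₁,…,i_{k-2}, i, j) ∈ [d]^k`, the
`k`-Spectrum entries coincide:
`r̂^(k)_{f₁,I_{k-1}}(G_{k-2}, ρ)† f̂₁,ᵢₖ(ρ) = r̂^(k)_{f₂,I_{k-1}}(G_{k-2}, ρ)† f̂₂,ᵢₖ(ρ)`. -/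
theorem kSpectrum_left_translation_invariant
    (n d k m : ℕ) (hn : 1 ≤ n) (hd : 1 ≤ d) (hk : 3 ≤ k)
    (ρ : Equiv.Perm (Fin n) → Matrix (Fin m) (Fin m) ℂ)
    (hρ_one : ρ 1 = 1)
    (hρ_mul : ∀ a b : Equiv.Perm (Fin n), ρ (a * b) = ρ a * ρ b)
    (hρ_unitary : ∀ g : Equiv.Perm (Fin n), (ρ g)ᴴ * ρ g = 1)
    (f₁ f₂ : Equiv.Perm (Fin n) → (Fin d → ℂ)) (σbar : Equiv.Perm (Fin n))
    (hf : ∀ σ : Equiv.Perm (Fin n), f₁ σ = f₂ (σbar * σ))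
    (G : Fin (k - 2) → Equiv.Perm (Fin n))
    (I : Fin (k - 2) → Fin d) (i j : Fin d) :
    (rhatMulti f₁ I i G ρ)ᴴ * fourierPerm (fun g => f₁ g j) ρ
      = (rhatMulti f₂ I i G ρ)ᴴ * fourierPerm (fun g => f₂ g j) ρ := by
  have h1 : rhatMulti f₂ I i G ρ = ρ σbar * rhatMulti f₁ I i G ρ := by
    unfold rhatMulti
    rw [Matrix.mul_smul, Finset.mul_sum, ← Equiv.sum_comp (Equiv.mulLeft σbar)]
    congr 1
    refine Finset.sum_congr rfl fun g _ => ?_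
    simp only [Equiv.coe_mulLeft, hf, hρ_mul, Matrix.mul_smul, mul_assoc]
  have h2 : fourierPerm (fun g => f₂ g j) ρ = ρ σbar * fourierPerm (fun g => f₁ g j) ρ := by
    unfold fourierPerm
    rw [Matrix.mul_smul, Finset.mul_sum, ← Equiv.sum_comp (Equiv.mulLeft σbar)]
    congr 1
    refine Finset.sum_congr rfl fun g _ => ?_
    simp only [Equiv.coe_mulLeft, hf, hρ_mul, Matrix.mul_smul]
  rw [h1, h2, Matrix.conjTranspose_mul, Matrix.mul_assoc, ← Matrix.mul_assoc (ρ σbar)ᴴ,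
    hρ_unitary, Matrix.one_mul]
end

section
/- Let n ≥ 3 and let A be the adjacency matrix of a simple undirected graph on n vertices (A symmetric, entries in {0,1}, zero diagonal). Then the third correlation of f_A evaluated at the pair of transpositions ((n−2,n), (n−2,n−1)) satisfies S^(3)_{f_A}((n−2,n), (n−2,n−1)) = (1/|S_n|) ∑_{g∈S_n} A_{g(n),g(n−1)} A_{g(n−2),g(n−1)} A_{g(n),g(n−2)} = 6T / (n(n−1)(n−2)), where T is the number of triangles of the graph (3-element vertex sets that are pairwise adjacent). -/
lemma fiber_card_eq {n : ℕ} (S s : Finset (Fin n)) (h : S.card = s.card) :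
    (Finset.univ.filter (fun g : Equiv.Perm (Fin n) => S.image g = s)).card =
    (Finset.univ.filter (fun g : Equiv.Perm (Fin n) => S.image g = S)).card := by
  classical
  obtain ⟨p, hp⟩ : ∃ p : Equiv.Perm (Fin n), S.image p = s := by
    let e : {x // x ∈ S} ≃ {x // x ∈ s} := Finset.equivOfCardEq h
    refine ⟨e.extendSubtype, ?_⟩
    apply Finset.eq_of_subset_of_card_le
    · intro x hx
      obtain ⟨y, hy, rfl⟩ := Finset.mem_image.1 hx
      exact e.extendSubtype_mem y hy
    · rw [Finset.card_image_of_injective _ (Equiv.injective _), h]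
  symm
  have key : ∀ q g : Equiv.Perm (Fin n), S.image (q * g) = (S.image g).image q := by
    intro q g
    rw [Finset.image_image]
    rfl
  apply Finset.card_bij' (fun g _ => p * g) (fun g _ => p⁻¹ * g)
  · intro g hg
    simp only [Finset.mem_filter, Finset.mem_univ, true_and] at hg ⊢
    rw [key, hg, hp]
  · intro g hg
    simp only [Finset.mem_filter, Finset.mem_univ, true_and] at hg ⊢
    rw [key, hg, ← hp, ← key]
    simp
  · intro g _
    simp
  · intro g _
    simp

/-- Let `n ≥ 3` and `A` the adjacency matrix of a simple undirected graph on
`n` vertices. Then the third correlation of `f_A` at the pair of transpositions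
`((n-2,n), (n-2,n-1))` satisfies
`S^(3)_{f_A}((n-2,n),(n-2,n-1)) = (1/n!) ∑_g A_{g(n),g(n-1)} A_{g(n-2),g(n-1)} A_{g(n),g(n-2)}
  = 6T / (n(n-1)(n-2))`,
where `T` is the number of triangles (3-element vertex sets that are pairwise adjacent). -/
theorem thirdCorrelation_triangles
    (n : ℕ) (hn : 3 ≤ n) (A : Matrix (Fin n) (Fin n) ℂ)
    (hsymm : ∀ i j : Fin n, A i j = A j i)
    (hent : ∀ i j : Fin n, A i j = 0 ∨ A i j = 1)
    (hdiag : ∀ i : Fin n, A i i = 0)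
    (T : ℕ)
    (hT : T = Set.ncard {s : Finset (Fin n) |
        s.card = 3 ∧ ∀ i ∈ s, ∀ j ∈ s, i ≠ j → A i j = 1}) :
    ((Nat.factorial n : ℂ))⁻¹ *
        (∑ g : Equiv.Perm (Fin n),
          A (g ⟨n - 1, by omega⟩) (g ⟨n - 2, by omega⟩) *
            A (g ⟨n - 3, by omega⟩) (g ⟨n - 2, by omega⟩) *
            A (g ⟨n - 1, by omega⟩) (g ⟨n - 3, by omega⟩))
      = 6 * (T : ℂ) / ((n * (n - 1) * (n - 2) : ℕ) : ℂ) := by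
  classical
  set a : Fin n := ⟨n - 1, by omega⟩ with ha
  set b : Fin n := ⟨n - 2, by omega⟩ with hb
  set c : Fin n := ⟨n - 3, by omega⟩ with hc
  have hab : a ≠ b := by simp [ha, hb]; omega
  have hac : a ≠ c := by simp [ha, hc]; omega
  have hbc : b ≠ c := by simp [hb, hc]; omega
  let S : Finset (Fin n) := {a, b, c}
  have hS : S.card = 3 := Finset.card_eq_three.2 ⟨a, b, c, hab, hac, hbc, rfl⟩
  let 𝒯 : Finset (Finset (Fin n)) := Finset.univ.filter (fun s =>
    s.card = 3 ∧ ∀ i ∈ s, ∀ j ∈ s, i ≠ j → A i j = 1)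
  have hT' : T = 𝒯.card := by
    rw [hT, ← Set.ncard_coe_finset]
    simp [𝒯]
  let k : ℕ := (Finset.univ.filter (fun g : Equiv.Perm (Fin n) => S.image g = S)).card
  have hcardS : ∀ g : Equiv.Perm (Fin n), (S.image g).card = 3 := fun g => by
    rw [Finset.card_image_of_injective _ g.injective, hS]
  have hterm : ∀ g : Equiv.Perm (Fin n),
      A (g a) (g b) * A (g c) (g b) * A (g a) (g c) = if S.image g ∈ 𝒯 then 1 else 0 := by
    intro g
    have h1 : g a ≠ g b := g.injective.ne hab
    have h2 : g a ≠ g c := g.injective.ne hac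
    have h3 : g b ≠ g c := g.injective.ne hbc
    have hiff : S.image g ∈ 𝒯 ↔ A (g a) (g b) = 1 ∧ A (g c) (g b) = 1 ∧ A (g a) (g c) = 1 := by
      have himg : S.image g = {g a, g b, g c} := by simp [S, Finset.image_insert]
      simp only [𝒯, Finset.mem_filter, Finset.mem_univ, true_and, hcardS g]
      rw [himg]
      constructor
      · intro h
        exact ⟨h _ (by simp) _ (by simp) h1, h _ (by simp) _ (by simp) h3.symm,
          h _ (by simp) _ (by simp) h2⟩
      · rintro ⟨e1, e2, e3⟩ i hi j hj hij
        simp only [Finset.mem_insert, Finset.mem_singleton] at hi hj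
        rcases hi with rfl | rfl | rfl <;> rcases hj with rfl | rfl | rfl <;>
          first
          | exact absurd rfl hij
          | assumption
          | (rw [hsymm]; assumption)
    by_cases hm : S.image g ∈ 𝒯
    · obtain ⟨e1, e2, e3⟩ := hiff.1 hm
      simp [hm, e1, e2, e3]
    · rw [if_neg hm]
      rw [hiff] at hm
      rcases hent (g a) (g b) with e1 | e1
      · simp [e1]
      rcases hent (g c) (g b) with e2 | e2
      · simp [e2]
      rcases hent (g a) (g c) with e3 | e3
      · simp [e3]
      exact absurd ⟨e1, e2, e3⟩ hm
  have hcount : (Finset.univ.filter (fun g : Equiv.Perm (Fin n) => S.image g ∈ 𝒯)).card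
      = 𝒯.card * k := by
    rw [Finset.card_eq_sum_card_fiberwise (f := fun g : Equiv.Perm (Fin n) => S.image g) (t := 𝒯)
      (fun g hg => by simpa using hg)]
    apply Finset.sum_const_nat
    intro s hs
    have hs3 : s.card = 3 := (Finset.mem_filter.1 hs).2.1
    refine Eq.trans ?_ (fiber_card_eq S s (hS.trans hs3.symm))
    rw [Finset.filter_filter]
    congr 1
    ext g
    simp only [Finset.mem_filter, Finset.mem_univ, true_and]
    exact ⟨fun h => h.2, fun h => ⟨h ▸ hs, h⟩⟩
  have htotal : n.factorial = n.choose 3 * k := by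
    have h0 : (Finset.univ : Finset (Equiv.Perm (Fin n))).card = n.factorial := by
      rw [Finset.card_univ, Fintype.card_perm, Fintype.card_fin]
    have h1 : (Finset.powersetCard 3 (Finset.univ : Finset (Fin n))).card = n.choose 3 := by
      simp
    rw [← h0, ← h1,
      Finset.card_eq_sum_card_fiberwise (f := fun g : Equiv.Perm (Fin n) => S.image g)
      (t := Finset.powersetCard 3 (Finset.univ : Finset (Fin n)))
      (fun g _ => by simpa using hcardS g)]
    apply Finset.sum_const_nat
    intro s hs
    exact fiber_card_eq S s (hS.trans (Finset.mem_powersetCard.1 hs).2.symm)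
  have hchoose : n * (n - 1) * (n - 2) = 6 * n.choose 3 := by
    have h := Nat.descFactorial_eq_factorial_mul_choose n 3
    simp only [Nat.descFactorial, Nat.factorial] at h
    have h' : n * (n - 1) * (n - 2) = (n - 2) * ((n - 1) * ((n - 0) * 1)) := by
      simp only [Nat.sub_zero, mul_one]
      ring
    rw [h', h]
  have hne : n.choose 3 * k ≠ 0 := htotal ▸ n.factorial_ne_zero
  have hc0 : (n.choose 3 : ℂ) ≠ 0 := by exact_mod_cast left_ne_zero_of_mul hne
  have hk0 : (k : ℂ) ≠ 0 := by exact_mod_cast right_ne_zero_of_mul hne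
  rw [Finset.sum_congr rfl (fun g _ => hterm g), Finset.sum_boole, hcount, htotal, hchoose, hT']
  push_cast
  field_simp
end

section
/- Let n ≥ 4 and let A be the adjacency matrix of a simple undirected graph on n vertices (A symmetric, entries in {0,1}, zero diagonal), with vertex degrees d_i = ∑_j A_{i,j}. Then the third correlation of f_A evaluated at the pair of transpositions ((n−2,n−1), (n−3,n−1)) satisfies S^(3)_{f_A}((n−2,n−1), (n−3,n−1)) = (1/|S_n|) ∑_{g∈S_n} A_{g(n),g(n−1)} A_{g(n),g(n−2)} A_{g(n),g(n−3)} = (∑_{i=1}^{n} d_i(d_i−1)(d_i−2)) / (n(n−1)(n−2)(n−3)). Equivalently, n(n−1)(n−2)(n−3) · S^(3)_{f_A}((n−2,n−1),(n−3,n−1)) equals six times the number of unordered triples of distinct edges all sharing one common vertex. -/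
open Finset in
lemma perm_embedding_avg (n : ℕ) (e₀ : Fin 4 ↪ Fin n) (F : (Fin 4 → Fin n) → ℂ) :
    ((n.descFactorial 4 : ℕ) : ℂ) * ∑ g : Equiv.Perm (Fin n), F (fun i => g (e₀ i))
      = (n.factorial : ℂ) * ∑ e : Fin 4 ↪ Fin n, F e := by
  have h1 : ∀ e : Fin 4 ↪ Fin n, ∑ g : Equiv.Perm (Fin n), F (fun i => g (e i))
      = ∑ g : Equiv.Perm (Fin n), F (fun i => g (e₀ i)) := by
    intro e
    obtain ⟨σ, hσ⟩ : ∃ σ : Equiv.Perm (Fin n), ∀ i, σ (e₀ i) = e i := by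
      have := (Equiv.Perm.isMultiplyPretransitive (Fin n) 4).exists_smul_eq e₀ e
      obtain ⟨σ, h⟩ := this
      exact ⟨σ, fun i => by rw [← h]; rfl⟩
    apply Fintype.sum_equiv (Equiv.mulRight σ)
    intro g
    simp [hσ]
  have h2 : ∀ g : Equiv.Perm (Fin n), ∑ e : Fin 4 ↪ Fin n, F (fun i => g (e i))
      = ∑ e : Fin 4 ↪ Fin n, F e := by
    intro g
    apply Fintype.sum_equiv (Equiv.embeddingCongr (Equiv.refl _) g)
    intro e
    rfl
  have h3 := Finset.sum_comm (s := (univ : Finset (Fin 4 ↪ Fin n)))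
    (t := (univ : Finset (Equiv.Perm (Fin n)))) (f := fun e g => F (fun i => g (e i)))
  simp only [h1, h2, Finset.sum_const, nsmul_eq_mul, Finset.card_univ,
    Fintype.card_embedding_eq, Fintype.card_perm, Fintype.card_fin] at h3
  exact h3

/-- Star embeddings are a centre together with an injective triple of neighbours. -/
def starEquiv (n : ℕ) (P : Fin n → Fin n → Prop) (hP : ∀ i, ¬ P i i) :
    {e : Fin 4 ↪ Fin n // P (e 0) (e 1) ∧ P (e 0) (e 2) ∧ P (e 0) (e 3)} ≃
      (Σ v : Fin n, (Fin 3 ↪ {j // P v j})) where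
  toFun e := ⟨e.1 0, ⟨fun i => ⟨e.1 i.succ, by
      obtain ⟨e, h1, h2, h3⟩ := e
      fin_cases i
      · exact h1
      · exact h2
      · exact h3⟩, fun i j h => by
      have := e.1.injective (Subtype.mk.inj h)
      exact Fin.succ_injective _ this⟩⟩
  invFun p := ⟨⟨Fin.cons p.1 (fun i => (p.2 i).1), by
      rw [Fin.cons_injective_iff]
      refine ⟨?_, fun i j h => p.2.injective (Subtype.ext h)⟩
      rintro ⟨i, hi⟩
      have := (p.2 i).2
      simp only [] at hi
      rw [hi] at this
      exact hP _ this⟩, (p.2 0).2, (p.2 1).2, (p.2 2).2⟩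
  left_inv e := by
    apply Subtype.ext
    apply Function.Embedding.ext
    intro i
    refine Fin.cases ?_ (fun i => ?_) i <;> rfl
  right_inv p := by
    obtain ⟨v, k⟩ := p
    rfl

open Finset Classical in
lemma sum_embedding_star (n : ℕ) (A : Matrix (Fin n) (Fin n) ℂ)
    (hent : ∀ i j : Fin n, A i j = 0 ∨ A i j = 1)
    (hdiag : ∀ i : Fin n, A i i = 0) :
    ∑ e : Fin 4 ↪ Fin n, A (e 0) (e 1) * A (e 0) (e 2) * A (e 0) (e 3)
      = ((∑ v : Fin n, (#{j | A v j = 1}).descFactorial 3 : ℕ) : ℂ) := by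
  have h := Fintype.card_congr (starEquiv n (fun i j => A i j = 1) (by simp [hdiag]))
  rw [Fintype.card_sigma] at h
  simp only [Fintype.card_embedding_eq, Fintype.card_fin, Fintype.card_subtype] at h
  rw [← h, ← Finset.sum_boole]
  apply Finset.sum_congr rfl
  intro e _
  rcases hent (e 0) (e 1) with h1 | h1 <;> rcases hent (e 0) (e 2) with h2 | h2 <;>
    rcases hent (e 0) (e 3) with h3 | h3 <;> simp [h1, h2, h3]

open Finset Classical in
lemma star_count (n : ℕ) (A : Matrix (Fin n) (Fin n) ℂ)
    (hsymm : ∀ i j : Fin n, A i j = A j i)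
    (hdiag : ∀ i : Fin n, A i i = 0) :
    Set.ncard {t : Finset (Finset (Fin n)) |
          t.card = 3 ∧
          (∀ e ∈ t, e.card = 2 ∧ ∀ i ∈ e, ∀ j ∈ e, i ≠ j → A i j = 1) ∧
          ∃ v : Fin n, ∀ e ∈ t, v ∈ e}
      = ∑ v : Fin n, (#{j | A v j = 1}).choose 3 := by
  have hne : ∀ v j, A v j = 1 → j ≠ v := by
    rintro v j h rfl
    simp [hdiag] at h
  have hpair : ∀ v j k : Fin n, j ≠ v → ({v, j} : Finset (Fin n)) = {v, k} → j = k := by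
    intro v j k hj h
    have : j ∈ ({v, k} : Finset (Fin n)) := by rw [← h]; simp
    simpa [hj] using this
  have himc : ∀ (v : Fin n) (s : Finset (Fin n)), (∀ j ∈ s, A v j = 1) →
      (s.image (fun j => ({v, j} : Finset (Fin n)))).card = s.card := by
    intro v s hs
    apply Finset.card_image_of_injOn
    intro j hj k hk h
    exact hpair v j k (hne _ _ (hs j hj)) h
  have hset : {t : Finset (Finset (Fin n)) |
          t.card = 3 ∧
          (∀ e ∈ t, e.card = 2 ∧ ∀ i ∈ e, ∀ j ∈ e, i ≠ j → A i j = 1) ∧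
          ∃ v : Fin n, ∀ e ∈ t, v ∈ e} =
      ↑(((univ : Finset (Fin n)).sigma
        (fun v => powersetCard 3 ({j | A v j = 1} : Finset (Fin n)))).image
        (fun p => p.2.image (fun j => ({p.1, j} : Finset (Fin n))))) := by
    ext t
    simp only [Set.mem_setOf_eq, coe_image, Set.mem_image, mem_coe, mem_sigma, mem_univ, true_and,
      mem_powersetCard]
    constructor
    · rintro ⟨h3, he, v, hv⟩
      have hs : ∀ j ∈ ({j | A v j = 1 ∧ {v, j} ∈ t} : Finset (Fin n)), A v j = 1 := by
        intro j hj
        simp at hj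
        exact hj.1
      have him : (({j | A v j = 1 ∧ {v, j} ∈ t} : Finset (Fin n)).image
          (fun j => ({v, j} : Finset (Fin n)))) = t := by
        ext e
        simp only [mem_image, mem_filter, mem_univ, true_and]
        constructor
        · rintro ⟨j, hj, rfl⟩
          exact hj.2
        · intro het
          obtain ⟨h2, hA⟩ := he e het
          have hve := hv e het
          obtain ⟨a, b, hab, rfl⟩ := Finset.card_eq_two.1 h2
          simp only [mem_insert, mem_singleton] at hve
          rcases hve with rfl | rfl
          · exact ⟨b, ⟨hA _ (by simp) _ (by simp) hab, het⟩, rfl⟩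
          · refine ⟨a, ⟨hA _ (by simp) _ (by simp) hab.symm, ?_⟩, Finset.pair_comm _ _⟩
            rw [Finset.pair_comm]; exact het
      refine ⟨⟨v, ({j | A v j = 1 ∧ {v, j} ∈ t} : Finset (Fin n))⟩, ⟨?_, ?_⟩, him⟩
      · intro j hj
        simpa using hs j hj
      · rw [← himc v _ hs, him, h3]
    · rintro ⟨⟨v, s⟩, ⟨hs, hc⟩, rfl⟩
      have hs' : ∀ j ∈ s, A v j = 1 := fun j hj => by simpa using hs hj
      refine ⟨by rw [himc v s hs']; exact hc, ?_, v, ?_⟩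
      · intro e he
        simp only [mem_image] at he
        obtain ⟨j, hj, rfl⟩ := he
        refine ⟨Finset.card_pair (hne _ _ (hs' j hj)).symm, ?_⟩
        intro a ha b hb hab
        simp only [mem_insert, mem_singleton] at ha hb
        rcases ha with rfl | rfl <;> rcases hb with rfl | rfl
        · exact absurd rfl hab
        · exact hs' _ hj
        · rw [hsymm]; exact hs' _ hj
        · exact absurd rfl hab
      · intro e he
        simp only [mem_image] at he
        obtain ⟨j, hj, rfl⟩ := he
        simp
  rw [hset, Set.ncard_coe_finset, Finset.card_image_of_injOn, Finset.card_sigma]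
  · simp [Finset.card_powersetCard]
  · rintro ⟨v, s⟩ h1 ⟨w, u⟩ h2 h
    simp only [mem_coe, mem_sigma, mem_univ, true_and, mem_powersetCard] at h1 h2 h
    obtain ⟨hs, hsc⟩ := h1
    obtain ⟨hu, huc⟩ := h2
    have hs' : ∀ j ∈ s, A v j = 1 := fun j hj => by simpa using hs hj
    have hu' : ∀ j ∈ u, A w j = 1 := fun j hj => by simpa using hu hj
    have hvw : w = v := by
      by_contra hwv
      have hsub : s ⊆ {w} := by
        intro j hj
        have hm : ({v, j} : Finset (Fin n)) ∈ u.image (fun j => ({w, j} : Finset (Fin n))) := by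
          rw [← h]; exact mem_image_of_mem _ hj
        obtain ⟨k, hk, hkk⟩ := mem_image.1 hm
        have : w ∈ ({v, j} : Finset (Fin n)) := by rw [← hkk]; simp
        simp only [mem_insert, mem_singleton, hwv, false_or] at this
        simp [this]
      have := Finset.card_le_card hsub
      simp at this
      omega
    subst hvw
    have key : ∀ a b : Finset (Fin n), (∀ j ∈ a, A w j = 1) →
        a.image (fun j => ({w, j} : Finset (Fin n))) = b.image (fun j => ({w, j} : Finset (Fin n)))
        → a ⊆ b := by
      intro a b ha hab j hj
      have hm : ({w, j} : Finset (Fin n)) ∈ b.image (fun j => ({w, j} : Finset (Fin n))) := by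
        rw [← hab]; exact mem_image_of_mem _ hj
      obtain ⟨k, hk, hkk⟩ := mem_image.1 hm
      rw [hpair w j k (hne _ _ (ha j hj)) hkk.symm]
      exact hk
    rw [Finset.Subset.antisymm (key s u hs' h) (key u s hu' h.symm)]

lemma cast_desc_three (d : ℕ) :
    ((d.descFactorial 3 : ℕ) : ℂ) = (d : ℂ) * ((d : ℂ) - 1) * ((d : ℂ) - 2) := by
  rcases d with _ | _ | d
  · simp
  · simp
  · simp only [Nat.descFactorial_succ, Nat.descFactorial_zero]
    have h1 : d + 1 + 1 - 2 = d := by omega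
    have h2 : d + 1 + 1 - 1 = d + 1 := by omega
    rw [h1, h2]
    push_cast [Nat.sub_zero]
    ring

/-- Let `n ≥ 4` and `A` the adjacency matrix of a simple undirected graph on
`n` vertices, with degrees `d_i = ∑_j A_{i,j}`. Then the third correlation of `f_A` at the
pair of transpositions `((n-2,n-1), (n-3,n-1))` satisfies
`S^(3)_{f_A}((n-2,n-1),(n-3,n-1)) = (1/n!) ∑_g A_{g(n),g(n-1)} A_{g(n),g(n-2)} A_{g(n),g(n-3)}
  = (∑_i d_i(d_i-1)(d_i-2)) / (n(n-1)(n-2)(n-3))`;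
equivalently, `n(n-1)(n-2)(n-3)` times this value equals six times the number of unordered
triples of distinct edges all sharing one common vertex. -/
theorem thirdCorrelation_star
    (n : ℕ) (hn : 4 ≤ n) (A : Matrix (Fin n) (Fin n) ℂ)
    (hsymm : ∀ i j : Fin n, A i j = A j i)
    (hent : ∀ i j : Fin n, A i j = 0 ∨ A i j = 1)
    (hdiag : ∀ i : Fin n, A i i = 0) :
    ((Nat.factorial n : ℂ))⁻¹ *
        (∑ g : Equiv.Perm (Fin n),
          A (g ⟨n - 1, by omega⟩) (g ⟨n - 2, by omega⟩) *
            A (g ⟨n - 1, by omega⟩) (g ⟨n - 3, by omega⟩) *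
            A (g ⟨n - 1, by omega⟩) (g ⟨n - 4, by omega⟩))
      = (∑ i : Fin n, (∑ j : Fin n, A i j) * ((∑ j : Fin n, A i j) - 1) *
            ((∑ j : Fin n, A i j) - 2)) /
          ((n * (n - 1) * (n - 2) * (n - 3) : ℕ) : ℂ)
    ∧ ((n * (n - 1) * (n - 2) * (n - 3) : ℕ) : ℂ) *
        (((Nat.factorial n : ℂ))⁻¹ *
          (∑ g : Equiv.Perm (Fin n),
            A (g ⟨n - 1, by omega⟩) (g ⟨n - 2, by omega⟩) *
              A (g ⟨n - 1, by omega⟩) (g ⟨n - 3, by omega⟩) *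
              A (g ⟨n - 1, by omega⟩) (g ⟨n - 4, by omega⟩)))
      = 6 * (Set.ncard {t : Finset (Finset (Fin n)) |
          t.card = 3 ∧
          (∀ e ∈ t, e.card = 2 ∧ ∀ i ∈ e, ∀ j ∈ e, i ≠ j → A i j = 1) ∧
          ∃ v : Fin n, ∀ e ∈ t, v ∈ e} : ℕ) := by
  classical
  have hD : n.descFactorial 4 = n * (n - 1) * (n - 2) * (n - 3) := by
    simp only [Nat.descFactorial_succ, Nat.descFactorial_zero, Nat.sub_zero]
    ring
  have hD0 : ((n * (n - 1) * (n - 2) * (n - 3) : ℕ) : ℂ) ≠ 0 := by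
    rw [← hD, Nat.cast_ne_zero]
    exact (Nat.descFactorial_pos.2 hn).ne'
  have hf0 : (n.factorial : ℂ) ≠ 0 := by
    exact_mod_cast n.factorial_ne_zero
  let e₀ : Fin 4 ↪ Fin n := ⟨fun i => ⟨n - 1 - i, by omega⟩, fun i j h => by
    have := Fin.mk.inj h
    apply Fin.ext
    omega⟩
  have hkey := perm_embedding_avg n e₀ (fun x => A (x 0) (x 1) * A (x 0) (x 2) * A (x 0) (x 3))
  rw [sum_embedding_star n A hent hdiag, hD] at hkey
  change _ * (∑ g : Equiv.Perm (Fin n),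
          A (g ⟨n - 1, by omega⟩) (g ⟨n - 2, by omega⟩) *
            A (g ⟨n - 1, by omega⟩) (g ⟨n - 3, by omega⟩) *
            A (g ⟨n - 1, by omega⟩) (g ⟨n - 4, by omega⟩)) = _ at hkey
  have hdeg : ∀ i, ∑ j, A i j = ((Finset.univ.filter (fun j => A i j = 1)).card : ℂ) := by
    intro i
    rw [← Finset.sum_boole]
    apply Finset.sum_congr rfl
    intro j _
    rcases hent i j with h | h <;> simp [h]
  have hS : (∑ i : Fin n, (∑ j : Fin n, A i j) * ((∑ j : Fin n, A i j) - 1) *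
            ((∑ j : Fin n, A i j) - 2)) =
      ((∑ v : Fin n, (Finset.univ.filter (fun j => A v j = 1)).card.descFactorial 3 : ℕ) : ℂ) := by
    rw [Nat.cast_sum]
    apply Finset.sum_congr rfl
    intro i _
    rw [cast_desc_three, hdeg]
  have hC : ((∑ v : Fin n, (Finset.univ.filter (fun j => A v j = 1)).card.descFactorial 3 : ℕ) : ℂ)
      = 6 * ((∑ v : Fin n, (Finset.univ.filter (fun j => A v j = 1)).card.choose 3 : ℕ) : ℂ) := by
    simp only [Nat.descFactorial_eq_factorial_mul_choose, ← Finset.mul_sum]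
    rw [Nat.cast_mul]
    norm_num [Nat.factorial]
  rw [star_count n A hsymm hdiag]
  constructor
  · rw [hS, eq_div_iff hD0, mul_assoc, mul_comm (Finset.sum _ _), inv_mul_eq_iff_eq_mul₀ hf0]
    convert hkey
  · rw [mul_left_comm, inv_mul_eq_iff_eq_mul₀ hf0]
    convert hkey.trans _
    rw [← hC]
end

section
/- Let n ≥ 4, let H ≤ S_n be the subgroup of permutations fixing both n−1 and n, let A be an n×n complex matrix, and let f_A(g) = A_{g(n), g(n−1)}. Then for every σ ∈ S_n, ∑_{h∈H} f_A(σ · h · (n−3,n−1)(n−2,n)) = (n−4)! · ∑_{j,l ∈ {1,…,n−2}, j≠l} A_{σ(j), σ(l)}. Equivalently, the average (1/|H|) ∑_{h∈H} f_A(σ h (n−3,n−1)(n−2,n)) equals (1/((n−2)(n−3))) ∑_{j≠l ∈ {1,…,n−2}} A_{σ(j), σ(l)}. -/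
/-- The subgroup of `S_n` consisting of permutations fixing both of the last two points
(the points `n-1` and `n` in 1-indexed notation, i.e. the indices `≥ n-2` in `Fin n`);
it has `(n-2)!` elements. -/
def fixLastTwo (n : ℕ) : Subgroup (Equiv.Perm (Fin n)) where
  carrier := {σ | ∀ i : Fin n, n - 2 ≤ (i : ℕ) → σ i = i}
  one_mem' := fun _ _ => rfl
  mul_mem' := by
    intro a b ha hb i hi
    simp only [Set.mem_setOf_eq] at ha hb ⊢
    rw [Equiv.Perm.mul_apply, hb i hi, ha i hi]
  inv_mem' := by
    intro a ha i hi
    simp only [Set.mem_setOf_eq] at ha ⊢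
    rw [Equiv.Perm.inv_eq_iff_eq]
    exact (ha i hi).symm

instance (n : ℕ) : DecidablePred (· ∈ fixLastTwo n) := fun σ =>
  decidable_of_iff (∀ i : Fin n, n - 2 ≤ (i : ℕ) → σ i = i) Iff.rfl

lemma fixLastTwo_lt_iff {n : ℕ} {h : Equiv.Perm (Fin n)} (hh : h ∈ fixLastTwo n) (i : Fin n) :
    ((h i : Fin n) : ℕ) < n - 2 ↔ (i : ℕ) < n - 2 := by
  have hh' : ∀ i : Fin n, n - 2 ≤ (i : ℕ) → h i = i := hh
  constructor
  · intro h1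
    by_contra h2
    rw [hh' i (by omega)] at h1
    exact h2 h1
  · intro h1
    by_contra h2
    have h3 := hh' (h i) (by omega)
    have h4 := h.injective h3
    rw [h4] at h2
    exact h2 h1

lemma card_fixLastTwo (n : ℕ) : Fintype.card (fixLastTwo n) = Nat.factorial (n - 2) := by
  have e : fixLastTwo n ≃ Equiv.Perm {i : Fin n // (i : ℕ) < n - 2} :=
    (Equiv.subtypeEquivRight (fun f => by
      show (∀ i : Fin n, n - 2 ≤ (i : ℕ) → f i = i) ↔ ∀ a : Fin n, ¬ ((a : ℕ) < n - 2) → f a = a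
      simp only [not_lt])).trans
    (Equiv.Perm.subtypeEquivSubtypePerm (fun i : Fin n => (i : ℕ) < n - 2)).symm
  rw [Fintype.card_congr e, Fintype.card_perm, Fintype.card_subtype, Fin.card_filter_val_lt]
  congr 1
  omega

lemma swap_mem_fixLastTwo {n : ℕ} {a b : Fin n} (ha : (a : ℕ) < n - 2) (hb : (b : ℕ) < n - 2) :
    Equiv.swap a b ∈ fixLastTwo n := by
  show ∀ i : Fin n, n - 2 ≤ (i : ℕ) → Equiv.swap a b i = i
  intro i hi
  apply Equiv.swap_apply_of_ne_of_ne <;> rintro rfl <;> omega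

lemma exists_fixLastTwo {n : ℕ} {a b c d : Fin n} (ha : (a : ℕ) < n - 2) (hb : (b : ℕ) < n - 2)
    (hc : (c : ℕ) < n - 2) (hd : (d : ℕ) < n - 2) (hab : a ≠ b) (hcd : c ≠ d) :
    ∃ k : fixLastTwo n, (k : Equiv.Perm (Fin n)) a = c ∧ (k : Equiv.Perm (Fin n)) b = d := by
  have h1 := swap_mem_fixLastTwo ha hc
  have h2 := swap_mem_fixLastTwo ((fixLastTwo_lt_iff h1 b).2 hb) hd
  refine ⟨⟨_, mul_mem h2 h1⟩, ?_, ?_⟩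
  · simp only [Equiv.Perm.mul_apply, Equiv.swap_apply_left]
    apply Equiv.swap_apply_of_ne_of_ne _ hcd
    intro h
    apply hab
    apply (Equiv.swap a c).injective
    rw [← h, Equiv.swap_apply_left]
  · simp

lemma sum_fixLastTwo_indep {n : ℕ} (F : Fin n → Fin n → ℂ) {a b c d : Fin n}
    (ha : (a : ℕ) < n - 2) (hb : (b : ℕ) < n - 2)
    (hc : (c : ℕ) < n - 2) (hd : (d : ℕ) < n - 2) (hab : a ≠ b) (hcd : c ≠ d) :
    ∑ h : fixLastTwo n, F ((h : Equiv.Perm (Fin n)) c) ((h : Equiv.Perm (Fin n)) d) =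
    ∑ h : fixLastTwo n, F ((h : Equiv.Perm (Fin n)) a) ((h : Equiv.Perm (Fin n)) b) := by
  obtain ⟨k, h1, h2⟩ := exists_fixLastTwo ha hb hc hd hab hcd
  apply Fintype.sum_equiv (Equiv.mulRight k)
  intro h
  simp [h1, h2]

lemma sum_fixLastTwo_key {n : ℕ} (F : Fin n → Fin n → ℂ) {a b : Fin n}
    (ha : (a : ℕ) < n - 2) (hb : (b : ℕ) < n - 2) (hab : a ≠ b) :
    (((n - 2) * (n - 3) : ℕ) : ℂ) *
      ∑ h : fixLastTwo n, F ((h : Equiv.Perm (Fin n)) a) ((h : Equiv.Perm (Fin n)) b) =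
    (Nat.factorial (n - 2) : ℂ) *
      ∑ j ∈ Finset.univ.filter (fun j : Fin n => (j : ℕ) < n - 2),
        ∑ l ∈ (Finset.univ.filter (fun l : Fin n => (l : ℕ) < n - 2)).erase j, F j l := by
  have hcard : (Finset.univ.filter (fun j : Fin n => (j : ℕ) < n - 2)).card = n - 2 := by
    rw [Fin.card_filter_val_lt]; omega
  set S := Finset.univ.filter (fun j : Fin n => (j : ℕ) < n - 2) with hS
  have hmem : ∀ j, j ∈ S ↔ (j : ℕ) < n - 2 := by simp [hS]
  have e1 : ∑ j ∈ S, ∑ l ∈ S.erase j,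
      ∑ h : fixLastTwo n, F ((h : Equiv.Perm (Fin n)) j) ((h : Equiv.Perm (Fin n)) l) =
      (((n - 2) * (n - 3) : ℕ) : ℂ) *
      ∑ h : fixLastTwo n, F ((h : Equiv.Perm (Fin n)) a) ((h : Equiv.Perm (Fin n)) b) := by
    set T := ∑ h : fixLastTwo n, F ((h : Equiv.Perm (Fin n)) a) ((h : Equiv.Perm (Fin n)) b)
      with hT
    have : ∀ j ∈ S, ∑ l ∈ S.erase j,
      ∑ h : fixLastTwo n, F ((h : Equiv.Perm (Fin n)) j) ((h : Equiv.Perm (Fin n)) l) =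
        ((n - 3 : ℕ) : ℂ) * T := by
      intro j hj
      rw [Finset.sum_congr rfl (g := fun _ => T), Finset.sum_const, Finset.card_erase_of_mem hj,
        hcard, nsmul_eq_mul]
      · rfl
      · intro l hl
        rw [Finset.mem_erase] at hl
        exact sum_fixLastTwo_indep F ha hb ((hmem _).1 hj) ((hmem _).1 hl.2) hab hl.1.symm
    rw [Finset.sum_congr rfl this, Finset.sum_const, hcard, nsmul_eq_mul]
    push_cast
    ring
  have e2 : ∑ j ∈ S, ∑ l ∈ S.erase j,
      ∑ h : fixLastTwo n, F ((h : Equiv.Perm (Fin n)) j) ((h : Equiv.Perm (Fin n)) l) =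
      ∑ h : fixLastTwo n, ∑ j ∈ S, ∑ l ∈ S.erase j,
        F ((h : Equiv.Perm (Fin n)) j) ((h : Equiv.Perm (Fin n)) l) := by
    rw [Finset.sum_comm]
    refine Finset.sum_congr rfl fun j _ => ?_
    rw [Finset.sum_comm]
  have e3 : ∀ h : fixLastTwo n, ∑ j ∈ S, ∑ l ∈ S.erase j,
        F ((h : Equiv.Perm (Fin n)) j) ((h : Equiv.Perm (Fin n)) l) =
      ∑ j ∈ S, ∑ l ∈ S.erase j, F j l := by
    intro h
    refine Finset.sum_equiv (h : Equiv.Perm (Fin n)) ?_ ?_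
    · intro i
      rw [hmem, hmem, fixLastTwo_lt_iff h.2]
    · intro j _
      refine Finset.sum_equiv (h : Equiv.Perm (Fin n)) ?_ ?_
      · intro i
        rw [Finset.mem_erase, Finset.mem_erase, hmem, hmem, fixLastTwo_lt_iff h.2]
        simp
      · intro i _
        rfl
  rw [← e1, e2, Finset.sum_congr rfl (fun h _ => e3 h), Finset.sum_const, Finset.card_univ,
    card_fixLastTwo, nsmul_eq_mul]

/-- Let `n ≥ 4`, `H = fixLastTwo n`, `A` an `n×n` complex matrix, and
`f_A(g) = A_{g(n), g(n-1)}`. Then for every `σ ∈ S_n`,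
`∑_{h∈H} f_A(σ h (n-3,n-1)(n-2,n)) = (n-4)! ∑_{j≠l∈{1,…,n-2}} A_{σ(j), σ(l)}`; equivalently,
`(1/|H|) ∑_{h∈H} f_A(σ h (n-3,n-1)(n-2,n)) = (1/((n-2)(n-3))) ∑_{j≠l} A_{σ(j), σ(l)}`.
(0-indexed, the double transposition is `(n-4,n-2)(n-3,n-1)`.) -/
theorem sum_over_H_case_g7
    (n : ℕ) (hn : 4 ≤ n) (A : Matrix (Fin n) (Fin n) ℂ) (σ : Equiv.Perm (Fin n)) :
    (∑ h : fixLastTwo n,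
        A ((σ * (h : Equiv.Perm (Fin n)) *
              (Equiv.swap (⟨n - 4, by omega⟩ : Fin n) (⟨n - 2, by omega⟩ : Fin n) *
                Equiv.swap (⟨n - 3, by omega⟩ : Fin n) (⟨n - 1, by omega⟩ : Fin n)))
            ⟨n - 1, by omega⟩)
          ((σ * (h : Equiv.Perm (Fin n)) *
              (Equiv.swap (⟨n - 4, by omega⟩ : Fin n) (⟨n - 2, by omega⟩ : Fin n) *
                Equiv.swap (⟨n - 3, by omega⟩ : Fin n) (⟨n - 1, by omega⟩ : Fin n)))
            ⟨n - 2, by omega⟩))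
      = ((Nat.factorial (n - 4) : ℂ)) *
          ∑ j ∈ Finset.univ.filter (fun j : Fin n => (j : ℕ) < n - 2),
            ∑ l ∈ (Finset.univ.filter (fun l : Fin n => (l : ℕ) < n - 2)).erase j,
              A (σ j) (σ l)
    ∧ ((Nat.factorial (n - 2) : ℂ))⁻¹ *
        (∑ h : fixLastTwo n,
          A ((σ * (h : Equiv.Perm (Fin n)) *
                (Equiv.swap (⟨n - 4, by omega⟩ : Fin n) (⟨n - 2, by omega⟩ : Fin n) *
                  Equiv.swap (⟨n - 3, by omega⟩ : Fin n) (⟨n - 1, by omega⟩ : Fin n)))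
              ⟨n - 1, by omega⟩)
            ((σ * (h : Equiv.Perm (Fin n)) *
                (Equiv.swap (⟨n - 4, by omega⟩ : Fin n) (⟨n - 2, by omega⟩ : Fin n) *
                  Equiv.swap (⟨n - 3, by omega⟩ : Fin n) (⟨n - 1, by omega⟩ : Fin n)))
              ⟨n - 2, by omega⟩))
      = ((((n - 2) * (n - 3) : ℕ)) : ℂ)⁻¹ *
          ∑ j ∈ Finset.univ.filter (fun j : Fin n => (j : ℕ) < n - 2),
            ∑ l ∈ (Finset.univ.filter (fun l : Fin n => (l : ℕ) < n - 2)).erase j,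
              A (σ j) (σ l) := by
  have s1 : (Equiv.swap (⟨n - 4, by omega⟩ : Fin n) (⟨n - 2, by omega⟩ : Fin n) *
      Equiv.swap (⟨n - 3, by omega⟩ : Fin n) (⟨n - 1, by omega⟩ : Fin n))
      ⟨n - 1, by omega⟩ = ⟨n - 3, by omega⟩ := by
    rw [Equiv.Perm.mul_apply, Equiv.swap_apply_right]
    apply Equiv.swap_apply_of_ne_of_ne <;> simp only [ne_eq, Fin.mk.injEq] <;> omega
  have s2 : (Equiv.swap (⟨n - 4, by omega⟩ : Fin n) (⟨n - 2, by omega⟩ : Fin n) *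
      Equiv.swap (⟨n - 3, by omega⟩ : Fin n) (⟨n - 1, by omega⟩ : Fin n))
      ⟨n - 2, by omega⟩ = ⟨n - 4, by omega⟩ := by
    have h0 : Equiv.swap (⟨n - 3, by omega⟩ : Fin n) (⟨n - 1, by omega⟩ : Fin n)
        ⟨n - 2, by omega⟩ = ⟨n - 2, by omega⟩ := by
      apply Equiv.swap_apply_of_ne_of_ne <;> simp only [ne_eq, Fin.mk.injEq] <;> omega
    rw [Equiv.Perm.mul_apply, h0, Equiv.swap_apply_right]
  have key := sum_fixLastTwo_key (n := n) (fun i j => A (σ i) (σ j))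
    (a := ⟨n - 3, by omega⟩) (b := ⟨n - 4, by omega⟩)
    (by simp only []; omega) (by simp only []; omega)
    (by simp only [ne_eq, Fin.mk.injEq]; omega)
  simp only [Equiv.Perm.mul_apply] at s1 s2 ⊢
  simp only [s1, s2]
  have hf : Nat.factorial (n - 2) = ((n - 2) * (n - 3)) * Nat.factorial (n - 4) := by
    obtain ⟨m, rfl⟩ := Nat.exists_eq_add_of_le hn
    have h2 : 4 + m - 2 = m + 1 + 1 := by omega
    have h3 : 4 + m - 3 = m + 1 := by omega
    have h4 : 4 + m - 4 = m := by omega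
    rw [h2, h3, h4, Nat.factorial_succ, Nat.factorial_succ, mul_assoc]
  have hN : (((n - 2) * (n - 3) : ℕ) : ℂ) ≠ 0 := by
    rw [Nat.cast_ne_zero]
    exact Nat.mul_ne_zero (by omega) (by omega)
  have hfac : (Nat.factorial (n - 2) : ℂ) ≠ 0 := Nat.cast_ne_zero.2 (Nat.factorial_ne_zero _)
  constructor
  · apply mul_left_cancel₀ hN
    rw [key, hf, Nat.cast_mul, mul_assoc]
  · rw [inv_mul_eq_iff_eq_mul₀ hfac, mul_left_comm, ← key, inv_mul_cancel_left₀ hN]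
end
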